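/- arXiv:2405.03160 — 3 statements merged into one kernel-verified Lean document; each statement's English description precedes it below -/
import Mathlib

section
/- For any dual quaternions q₁ and q₂, the triangle inequality holds: |q₁ + q₂| ≤ |q₁| + |q₂|. -/
/-!
The standard part of `|q₁| + |q₂| - |q₁ + q₂|` is `|a| + |b| - |a + b| ≥ 0`, where `a`, `b` are
the standard parts of `q₁`, `q₂`, and only the equality case `|a + b| = |a| + |b|` concerns the
dual parts. If `a + b = 0`, then `a = b = 0` and the dual parts are compared by the triangle
inequality in `ℍ`. Otherwise `a` and `b` are nonnegative multiples of the unit vector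
`u = (a + b) / |a + b|` (`eq_norm_smul_of_norm_add_eq`). The dual part of `|q₁ + q₂|` is the inner
product of `u` with the dual part of `q₁ + q₂`, which is additive, and each summand is bounded by
the dual part of `|qᵢ|` (`inner_le_dqMag_snd`).
-/

/-!
Formalization background for "Moore Determinant of Dual Quaternion Hermitian Matrices"
(Cui, Qi, Song, Wang).

A dual quaternion is `q = q_s + q_d ε` with `q_s, q_d` quaternions, `ε² = 0`; it is modeled
by `DualNumber (Quaternion ℝ)`.
-/

open Quaternion Matrix

noncomputable section

/-- Dual quaternions: dual numbers over the quaternions. -/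
abbrev DualQuaternion : Type := DualNumber (Quaternion ℝ)

namespace DQPaper

/-- Conjugation of dual quaternions: `(q_s + q_d ε)* = q_s* + q_d* ε`. -/
instance : Star DualQuaternion := ⟨fun q => (star q.fst, star q.snd)⟩

/-- The real part of a dual quaternion `q = q_s + q_d ε`, as the dual number
`Re(q_s) + Re(q_d) ε`. -/
def dqRe (q : DualQuaternion) : DualNumber ℝ := (q.fst.re, q.snd.re)

/-- The embedding of the dual numbers into the dual quaternions. -/
def toDQ (d : DualNumber ℝ) : DualQuaternion := ((d.fst : ℍ[ℝ]), (d.snd : ℍ[ℝ]))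

/-- A dual quaternion is a dual number if its standard and dual parts are both real. -/
def IsDualNum (q : DualQuaternion) : Prop := ∃ d : DualNumber ℝ, q = toDQ d

/-- A dual number `a + b ε` is nonnegative if `a > 0`, or `a = 0` and `b ≥ 0`. -/
def DNNonneg (u : DualNumber ℝ) : Prop := 0 < u.fst ∨ (u.fst = 0 ∧ 0 ≤ u.snd)

/-- The order on dual numbers: `u ≤ v` iff `v - u` is nonnegative. -/
def dnLe (u v : DualNumber ℝ) : Prop := DNNonneg (v - u)

open Classical in
/-- The magnitude of a dual quaternion `p = p_s + p_d ε`, as a dual number: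
`|p| = |p_s| + ((p_s* p_d + p_d* p_s)/(2|p_s|)) ε` if `p_s ≠ 0`, and `|p| = |p_d| ε`
otherwise. -/
def dqMag (p : DualQuaternion) : DualNumber ℝ :=
  if p.fst = 0 then (0, ‖p.snd‖)
  else (‖p.fst‖, ((star p.fst * p.snd + star p.snd * p.fst).re) / (2 * ‖p.fst‖))

/-- The cycle of the permutation `σ` containing `i`, listed as `[i, σ i, σ² i, …]`. -/
def cycleList {n : ℕ} (σ : Equiv.Perm (Fin n)) (i : Fin n) : List (Fin n) :=
  i :: (((List.range n).map (fun k => (σ ^ (k + 1)) i)).takeWhile (fun j => decide (j ≠ i)))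

/-- The leaders (largest element of each cycle) of `σ`, listed in decreasing order;
this is the normalization used in the Chen determinant. -/
def chenLeaders {n : ℕ} (σ : Equiv.Perm (Fin n)) : List (Fin n) :=
  ((List.finRange n).filter (fun i => (cycleList σ i).all (fun j => decide (j ≤ i)))).reverse

/-- All of `Fin n` listed in the normalized cycle order of the Chen determinant:
each cycle is led by its largest element, and cycles are ordered by decreasing leaders
(so the first cycle contains the last index). -/
def chenOrder {n : ℕ} (σ : Equiv.Perm (Fin n)) : List (Fin n) :=
  ((chenLeaders σ).map (cycleList σ)).flatten

/-- The Chen determinant of a square matrix over a (possibly noncommutative) ring: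
`Cdet A = Σ_σ (−1)^{n−r} a_σ`, where `σ` runs over all permutations written in the
normalized cycle form with `r` disjoint cycles, and `a_σ` is the ordered product of the
entries `A i (σ i)` along the normalized cycle order. -/
def Cdet {n : ℕ} {R : Type*} [Ring R] (A : Matrix (Fin n) (Fin n) R) : R :=
  ∑ σ : Equiv.Perm (Fin n),
    (-1 : R) ^ (n - (chenLeaders σ).length) * ((chenOrder σ).map (fun i => A i (σ i))).prod

/-- The leaders (smallest element of each cycle) of `σ`, listed in decreasing order;
this is the normalization used in the Moore determinant. -/
def mooreLeaders {n : ℕ} (σ : Equiv.Perm (Fin n)) : List (Fin n) :=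
  ((List.finRange n).filter (fun i => (cycleList σ i).all (fun j => decide (i ≤ j)))).reverse

/-- All of `Fin n` listed in the normalized cycle order of the Moore determinant:
each cycle is led by its smallest element, and cycles are ordered by decreasing leaders. -/
def mooreOrder {n : ℕ} (σ : Equiv.Perm (Fin n)) : List (Fin n) :=
  ((mooreLeaders σ).map (cycleList σ)).flatten

/-- The Moore determinant of a square matrix over a (possibly noncommutative) ring:
`Mdet A = Σ_σ s(σ) a_σ`, where `s(σ)` is the sign of `σ` and `a_σ` is the ordered product
of the entries `A i (σ i)` along the normalized (Moore) cycle order. -/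
def Mdet {n : ℕ} {R : Type*} [Ring R] (A : Matrix (Fin n) (Fin n) R) : R :=
  ∑ σ : Equiv.Perm (Fin n),
    ((Equiv.Perm.sign σ : ℤ) : R) * ((mooreOrder σ).map (fun i => A i (σ i))).prod

/-- The switching matrix `P_{ij}`: the identity matrix with rows `i` and `j` interchanged. -/
def switchMatrix {R : Type*} [Ring R] {n : ℕ} (i j : Fin n) : Matrix (Fin n) (Fin n) R :=
  Matrix.of fun k l =>
    if (k = i ∧ l = j) ∨ (k = j ∧ l = i) ∨ (k = l ∧ k ≠ i ∧ k ≠ j) then 1 else 0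

/-- The multiplication matrix `P_{i;c}`: the identity matrix with the `(i,i)` entry
replaced by `c`. -/
def mulMatrix {R : Type*} [Ring R] {n : ℕ} (i : Fin n) (c : R) : Matrix (Fin n) (Fin n) R :=
  Matrix.of fun k l => if k = l then (if k = i then c else 1) else 0

/-- The addition matrix `P_{ij;c}`: the identity matrix with an extra entry `c` in
position `(j,i)`, so that `P_{ij;c} * A` adds `c` times row `i` of `A` to row `j`. -/
def addMatrix {R : Type*} [Ring R] {n : ℕ} (i j : Fin n) (c : R) : Matrix (Fin n) (Fin n) R :=
  Matrix.of fun k l => (if k = l then 1 else 0) + (if k = j ∧ l = i then c else 0)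

/-- The product `A i₁ i₂ * A i₂ i₃ * ⋯ * A i_{m-1} i_m` of matrix entries along a chain of
indices `[i₁, …, i_m]`; applied to a closed chain `[i₁, …, i_m, i₁]` it gives the cycle
product `⟨i₁ … i_m i₁⟩ = a_{i₁ i₂} ⋯ a_{i_m i₁}`. -/
def chainProd {n : ℕ} (A : Matrix (Fin n) (Fin n) DualQuaternion) :
    List (Fin n) → DualQuaternion
  | [] => 1
  | [_] => 1
  | i :: j :: rest => A i j * chainProd A (j :: rest)

/-- A dual number `lam` is a (right) eigenvalue of the dual quaternion matrix `A` if
`A x = x lam` for some appreciable dual quaternion vector `x` (i.e. one whose standard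
part is nonzero). -/
def IsEigenvalue {n : ℕ} (A : Matrix (Fin n) (Fin n) DualQuaternion)
    (lam : DualNumber ℝ) : Prop :=
  ∃ x : Fin n → DualQuaternion,
    (fun i => (x i).fst) ≠ 0 ∧ A.mulVec x = fun i => x i * toDQ lam

/-- The dual quaternion Hermitian matrix `A` has the dual numbers `lam 1, …, lam n` as its
eigenvalues (counted with multiplicity), via the unitary diagonalization `U A U* = diag(lam)`
of Qi and Luo (2023). -/
def HasEigenvalues {n : ℕ} (A : Matrix (Fin n) (Fin n) DualQuaternion)
    (lam : Fin n → DualNumber ℝ) : Prop :=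
  ∃ U : Matrix (Fin n) (Fin n) DualQuaternion,
    Uᴴ * U = 1 ∧ U * A * Uᴴ = Matrix.diagonal fun i => toDQ (lam i)

theorem dqMag_fst (p : DualQuaternion) : (dqMag p).fst = ‖p.fst‖ := by
  by_cases h : p.fst = 0
  · rw [h, norm_zero]
    exact congrArg TrivSqZeroExt.fst (if_pos h)
  · exact congrArg TrivSqZeroExt.fst (if_neg h)

theorem dqMag_snd_of_fst_eq_zero {p : DualQuaternion} (h : p.fst = 0) :
    (dqMag p).snd = ‖p.snd‖ :=
  congrArg TrivSqZeroExt.snd (if_pos h)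

theorem dqMag_snd_of_fst_ne_zero {p : DualQuaternion} (h : p.fst ≠ 0) :
    (dqMag p).snd = inner ℝ p.fst p.snd / ‖p.fst‖ := by
  have hre : (star p.fst * p.snd + star p.snd * p.fst).re = 2 * inner ℝ p.fst p.snd := by
    simp only [Quaternion.inner_def, Quaternion.re_add, Quaternion.re_mul, Quaternion.re_star,
      Quaternion.imI_star, Quaternion.imJ_star, Quaternion.imK_star]
    ring
  have hsnd : (dqMag p).snd =
      (star p.fst * p.snd + star p.snd * p.fst).re / (2 * ‖p.fst‖) :=
    congrArg TrivSqZeroExt.snd (if_neg h)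
  rw [hsnd, hre, mul_div_mul_left _ _ two_ne_zero]

/-- If the unit quaternion `u` spans the direction of `p_s`, the dual part of `|p|` dominates
the component of `p_d` along `u`. For `p_s ≠ 0` this is an equality; for `p_s = 0` every unit
`u` qualifies and the bound is Cauchy–Schwarz. -/
theorem inner_le_dqMag_snd {p : DualQuaternion} {u : ℍ[ℝ]} (hu : ‖u‖ = 1)
    (hp : p.fst = ‖p.fst‖ • u) : inner ℝ u p.snd ≤ (dqMag p).snd := by
  by_cases h : p.fst = 0
  · rw [dqMag_snd_of_fst_eq_zero h]
    simpa [hu] using real_inner_le_norm u p.snd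
  · have hn : ‖p.fst‖ ≠ 0 := norm_ne_zero_iff.mpr h
    have hi : inner ℝ p.fst p.snd = ‖p.fst‖ * inner ℝ u p.snd := by
      conv_lhs => rw [hp, real_inner_smul_left]
    rw [dqMag_snd_of_fst_ne_zero h, hi, mul_div_cancel_left₀ _ hn]

/-- In the equality case of the triangle inequality with `a + b ≠ 0`, the vector `a` points
along the unit vector of `a + b`. -/
theorem eq_norm_smul_of_norm_add_eq {a b : ℍ[ℝ]} (hab : ‖a + b‖ = ‖a‖ + ‖b‖) (h : a + b ≠ 0) :
    a = ‖a‖ • (‖a + b‖⁻¹ • (a + b)) := by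
  have hn : ‖a + b‖ ≠ 0 := norm_ne_zero_iff.mpr h
  have hray : ‖a‖ • b = ‖b‖ • a := (sameRay_iff_norm_smul_eq.mp (sameRay_iff_norm_add.mpr hab))
  rw [smul_comm, smul_add, hray, ← add_smul, ← hab, smul_smul, inv_mul_cancel₀ hn, one_smul]

/-- The triangle inequality for the magnitude of dual quaternions:
`|q₁ + q₂| ≤ |q₁| + |q₂|`. -/
theorem statement2 (q₁ q₂ : DualQuaternion) :
    dnLe (dqMag (q₁ + q₂)) (dqMag q₁ + dqMag q₂) := by
  unfold dnLe DNNonneg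
  simp only [TrivSqZeroExt.fst_sub, TrivSqZeroExt.snd_sub, TrivSqZeroExt.fst_add,
    TrivSqZeroExt.snd_add, dqMag_fst, sub_pos, sub_eq_zero, sub_nonneg]
  rcases (norm_add_le q₁.fst q₂.fst).lt_or_eq with hlt | heq
  · exact Or.inl hlt
  refine Or.inr ⟨heq.symm, ?_⟩
  by_cases h : q₁.fst + q₂.fst = 0
  · rw [h, norm_zero] at heq
    -- The norms add up to `0`, so both standard parts vanish.
    have h₁ : q₁.fst = 0 := norm_eq_zero.mp (by
      linarith [norm_nonneg q₁.fst, norm_nonneg q₂.fst])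
    have h₂ : q₂.fst = 0 := norm_eq_zero.mp (by
      linarith [norm_nonneg q₁.fst, norm_nonneg q₂.fst])
    rw [dqMag_snd_of_fst_eq_zero (p := q₁ + q₂) h, dqMag_snd_of_fst_eq_zero h₁,
      dqMag_snd_of_fst_eq_zero h₂]
    exact norm_add_le _ _
  · have hu : ‖‖q₁.fst + q₂.fst‖⁻¹ • (q₁.fst + q₂.fst)‖ = 1 := norm_smul_inv_norm h
    have b₁ := inner_le_dqMag_snd hu (eq_norm_smul_of_norm_add_eq heq h)
    have b₂ := inner_le_dqMag_snd (p := q₂) hu (by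
      have := eq_norm_smul_of_norm_add_eq (a := q₂.fst) (b := q₁.fst)
        (by rw [add_comm, heq, add_comm]) (by rwa [add_comm])
      rwa [add_comm q₂.fst] at this)
    rw [dqMag_snd_of_fst_ne_zero (p := q₁ + q₂) h, TrivSqZeroExt.fst_add,
      TrivSqZeroExt.snd_add, div_eq_inv_mul, ← real_inner_smul_left, inner_add_right]
    exact add_le_add b₁ b₂

end DQPaper
end
end

section
/- Let A = (a_ij) be an n×n quaternion Hermitian matrix, α a quaternion, P_ij a switching matrix, P_{i;α} a multiplication matrix, and P_{ij;α} an addition matrix. Then: (i) Cdet(P_ij* A P_ij) = Cdet(A); (ii) Cdet(P_{n;α} A) = α Cdet(A), Cdet(A P_{n;α}) = α Cdet(A), and Cdet(P_{i;α}* A P_{i;α}) = α*α Cdet(A); (iii) Cdet(P_{ij;α}* A P_{ij;α}) = Cdet(A); (iv) for any unitary quaternion matrix U (i.e., U*U = I_n), Cdet(U*AU) = Cdet(A). -/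
/-!
Why the theorem holds. For a set `Q` of indices let `h(Q; s, e)` (`pathSum`) be the sum, with sign
`(-1)^|Q|`, of the products of entries of `A` along all paths from `s` to `e` whose interior
vertices are exactly the elements of `Q`, and let `d(S)` (`chenOn`) be the Chen determinant of the
principal submatrix on `S`. Peeling off the cycle of the largest index `m` gives, over any ring,
`d(S ∪ {m}) = ∑_{Q ⊆ S} h(Q; m, m) d(S \ Q)` (`chenOn_insert_max`).

Let `A` be Hermitian. Reversing paths shows `h(Q; s, e)* = h(Q; e, s)`, so `h(Q; m, m)` and `d(S)`
are real, and the expansion holds for every `m ∉ S` (`chenOn_insert`), because the real part of a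
cycle product does not depend on the starting vertex. Put
`F(S; s, e) = ∑_{Q ⊆ S} h(Q; s, e) d(S \ Q)` (`pathConv`). Then `F(S; j, e) = 0` for `j ∈ S`
(`pathConv_eq_zero`), the analogue of "two equal rows".

* Multiplication and addition matrices change one row and one column. Expanding along the changed
  index `i` and using that `F(S; i, i)` is sesquilinear in row and column `i`
  (`pathConv_combination`), all cross terms are of the form `F(S; j, _)` or `F(S; _, j)` with
  `j ∈ S` and vanish.
* For unitary matrices, let `e_r` be the sum of all `d(S)` with `|S| = r` and `G_r` the matrix with
  entries `∑_{|S| = r} F(S; s, e)`. The vanishing of `F` gives the Faddeev–LeVerrier recursion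
  `G_0 = A`, `G_{r+1} = e_{r+1} A - A G_r`, `tr G_r = (r + 1) e_{r+1}`. Since the real part of the
  trace is invariant under conjugation by a unitary matrix, so is every `e_r`, in particular
  `e_n = Cdet A` for an `n × n` matrix. Switching matrices are unitary.
-/

/-!
Formalization background for "Moore Determinant of Dual Quaternion Hermitian Matrices"
(Cui, Qi, Song, Wang).

A dual quaternion is `q = q_s + q_d ε` with `q_s, q_d` quaternions, `ε² = 0`; it is modeled
by `DualNumber (Quaternion ℝ)`.
-/

open Quaternion Matrix

noncomputable section

namespace DQPaper

/-! ### Signed sums over simple paths -/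

section Paths

variable {n : ℕ} {R : Type*} [Ring R]

/-- The product `A s k₁ * A k₁ k₂ * ⋯ * A k_l e` along the path from `s` to `e` with interior
vertices `[k₁, …, k_l]`. -/
def pathProd (A : Matrix (Fin n) (Fin n) R) : Fin n → List (Fin n) → Fin n → R
  | s, [], e => A s e
  | s, k :: l, e => A s k * pathProd A k l e

/-- The finite set of all orderings of `Q`, as lists. -/
def orderings (Q : Finset (Fin n)) : Finset (List (Fin n)) := Q.toList.permutations.toFinset

lemma mem_orderings {Q : Finset (Fin n)} {l : List (Fin n)} :
    l ∈ orderings Q ↔ l.Nodup ∧ l.toFinset = Q := by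
  simp only [orderings, List.mem_toFinset, List.mem_permutations]
  constructor
  · intro h
    refine ⟨h.nodup_iff.2 Q.nodup_toList, ?_⟩
    rw [List.toFinset_eq_of_perm _ _ h, Finset.toList_toFinset]
  · rintro ⟨h, rfl⟩
    exact (List.perm_ext_iff_of_nodup h (Finset.nodup_toList _)).2 (by simp)

/-- The signed sum of the path products from `s` to `e` over all paths whose interior vertices
are exactly the elements of `Q`, each visited once; the sign is `(-1)^|Q|`. -/
def pathSum (A : Matrix (Fin n) (Fin n) R) (Q : Finset (Fin n)) (s e : Fin n) : R :=
  ∑ l ∈ orderings Q, (-1) ^ l.length * pathProd A s l e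

lemma pathSum_empty (A : Matrix (Fin n) (Fin n) R) (s e : Fin n) : pathSum A ∅ s e = A s e := by
  simp [pathSum, orderings, pathProd]

/-- Splitting off the first interior vertex of a path. -/
lemma pathSum_of_nonempty (A : Matrix (Fin n) (Fin n) R) {Q : Finset (Fin n)} (hQ : Q.Nonempty)
    (s e : Fin n) : pathSum A Q s e = -∑ k ∈ Q, A s k * pathSum A (Q.erase k) k e := by
  simp only [pathSum, Finset.mul_sum]
  rw [Finset.sum_sigma', ← Finset.sum_neg_distrib]
  symm
  refine Finset.sum_bij (fun p _ => p.1 :: p.2) ?_ ?_ ?_ ?_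
  · rintro ⟨k, l⟩ h
    simp only [Finset.mem_sigma, mem_orderings] at h ⊢
    obtain ⟨hk, hl, hQ⟩ := h
    have : k ∉ l := by
      rw [← List.mem_toFinset, hQ]; simp
    refine ⟨List.nodup_cons.2 ⟨this, hl⟩, ?_⟩
    rw [List.toFinset_cons, hQ, Finset.insert_erase hk]
  · rintro ⟨k, l⟩ _ ⟨k', l'⟩ _ h
    simp only [List.cons.injEq] at h
    obtain ⟨rfl, rfl⟩ := h
    rfl
  · intro l hl
    rw [mem_orderings] at hl
    obtain ⟨hl, rfl⟩ := hl
    cases l with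
    | nil => simp at hQ
    | cons k l =>
      rw [List.nodup_cons] at hl
      refine ⟨⟨k, l⟩, ?_, rfl⟩
      simp only [Finset.mem_sigma, mem_orderings, List.toFinset_cons, Finset.mem_insert, true_or,
        true_and]
      refine ⟨hl.2, ?_⟩
      rw [Finset.erase_insert (by simpa using hl.1)]
  · rintro ⟨k, l⟩ _
    have hc : Commute ((-1 : R) ^ l.length) (A s k) :=
      (Commute.neg_one_left _).pow_left _
    simp only [List.length_cons, pathProd, pow_succ, mul_neg, mul_one, neg_mul]
    rw [← mul_assoc, ← mul_assoc, hc.eq]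

lemma sum_powerset_sum_mem {M : Type*} [AddCommMonoid M] (Q : Finset (Fin n))
    (f : Finset (Fin n) → Fin n → M) :
    ∑ C ∈ Q.powerset, ∑ k ∈ C, f C k =
      ∑ k ∈ Q, ∑ C ∈ (Q.erase k).powerset, f (insert k C) k := by
  rw [Finset.sum_sigma', Finset.sum_sigma']
  refine Finset.sum_bij' (fun p _ => ⟨p.2, p.1.erase p.2⟩) (fun p _ => ⟨insert p.1 p.2, p.1⟩)
    ?_ ?_ ?_ ?_ ?_
  · rintro ⟨C, k⟩ h
    simp only [Finset.mem_sigma, Finset.mem_powerset] at h ⊢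
    exact ⟨h.1 h.2, Finset.erase_subset_erase _ h.1⟩
  · rintro ⟨k, C⟩ h
    simp only [Finset.mem_sigma, Finset.mem_powerset] at h ⊢
    exact ⟨Finset.insert_subset h.1 (h.2.trans (Finset.erase_subset _ _)),
      Finset.mem_insert_self _ _⟩
  · rintro ⟨C, k⟩ h
    simp only [Finset.mem_sigma, Finset.mem_powerset] at h
    simp [Finset.insert_erase h.2]
  · rintro ⟨k, C⟩ h
    simp only [Finset.mem_sigma, Finset.mem_powerset] at h
    have : k ∉ C := fun hk => by simpa using h.2 hk
    simp [Finset.erase_insert this]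
  · rintro ⟨C, k⟩ h
    simp only [Finset.mem_sigma, Finset.mem_powerset] at h
    simp [Finset.insert_erase h.2]

/-- The sum over all simple paths from `s` to `e` with interior in `S`, each weighted on the right
by the value of `w` at the set of unvisited vertices of `S`. -/
def pathConv (A : Matrix (Fin n) (Fin n) R) (w : Finset (Fin n) → R) (S : Finset (Fin n))
    (s e : Fin n) : R :=
  ∑ Q ∈ S.powerset, pathSum A Q s e * w (S \ Q)

/-- Splitting off the first step of the path. -/
lemma pathConv_rec (A : Matrix (Fin n) (Fin n) R) (w : Finset (Fin n) → R) (S : Finset (Fin n))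
    (s e : Fin n) :
    pathConv A w S s e = A s e * w S - ∑ k ∈ S, A s k * pathConv A w (S.erase k) k e := by
  have h1 : ∀ Q ∈ S.powerset, pathSum A Q s e * w (S \ Q) =
      (if Q = ∅ then A s e * w S else 0) +
        ∑ k ∈ Q, -(A s k * (pathSum A (Q.erase k) k e * w (S \ Q))) := by
    intro Q _
    rcases Q.eq_empty_or_nonempty with rfl | hQ
    · simp [pathSum_empty]
    · rw [pathSum_of_nonempty A hQ, if_neg hQ.ne_empty, zero_add, Finset.sum_neg_distrib, neg_mul,
        Finset.sum_mul]
      simp only [mul_assoc]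
  rw [pathConv, Finset.sum_congr rfl h1, Finset.sum_add_distrib,
    sum_powerset_sum_mem S fun C k => -(A s k * (pathSum A (C.erase k) k e * w (S \ C)))]
  rw [Finset.sum_ite_eq' _ _ fun _ => A s e * w S, if_pos (Finset.empty_mem_powerset _),
    sub_eq_add_neg, ← Finset.sum_neg_distrib]
  congr 1
  refine Finset.sum_congr rfl fun k hk => ?_
  rw [pathConv, Finset.mul_sum, ← Finset.sum_neg_distrib]
  refine Finset.sum_congr rfl fun C hC => ?_
  have : k ∉ C := fun hk => by simpa using Finset.mem_powerset.1 hC hk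
  rw [Finset.erase_insert this, Finset.sdiff_insert, Finset.erase_sdiff_comm]

/-- Cutting a path at an interior vertex `j`. -/
lemma pathSum_insert (A : Matrix (Fin n) (Fin n) R) (j e : Fin n) (Q : Finset (Fin n))
    (hj : j ∉ Q) (s : Fin n) :
    pathSum A (insert j Q) s e = -pathConv A (fun T => pathSum A T j e) Q s j := by
  induction Q using Finset.strongInduction generalizing s with
  | H Q ih =>
    rw [pathSum_of_nonempty A (Finset.insert_nonempty _ _), Finset.sum_insert hj,
      Finset.erase_insert hj, pathConv_rec, neg_add, neg_sub, sub_eq_add_neg, add_comm]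
    congr 1
    rw [← Finset.sum_neg_distrib]
    refine Finset.sum_congr rfl fun k hk => ?_
    have hkj : k ≠ j := fun h => hj (h ▸ hk)
    rw [Finset.erase_insert_of_ne hkj.symm, ih _ (Finset.erase_ssubset hk) (by simp [hj]), mul_neg,
      neg_neg]

/-- `pathSum` only depends on the entries it reads. -/
lemma pathSum_congr {A B : Matrix (Fin n) (Fin n) R} (T : Finset (Fin n))
    (h : ∀ k ∈ T, ∀ l ∈ T, B k l = A k l) (Q : Finset (Fin n)) (hQ : Q ⊆ T) {s e : Fin n}
    (hs : s ∈ T) (he : e ∈ T) : pathSum B Q s e = pathSum A Q s e := by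
  induction Q using Finset.strongInduction generalizing s with
  | H Q ih =>
    rcases Q.eq_empty_or_nonempty with rfl | hne
    · simp [pathSum_empty, h s hs e he]
    · rw [pathSum_of_nonempty A hne, pathSum_of_nonempty B hne]
      congr 1
      refine Finset.sum_congr rfl fun k hk => ?_
      rw [h s hs k (hQ hk), ih _ (Finset.erase_ssubset hk)
        ((Finset.erase_subset _ _).trans hQ) (hQ hk)]

/-- Reversing all paths conjugates the path sums of a Hermitian matrix. -/
lemma star_pathSum [StarRing R] {A : Matrix (Fin n) (Fin n) R} (hA : Aᴴ = A)
    (Q : Finset (Fin n)) (s e : Fin n) : star (pathSum A Q s e) = pathSum A Q e s := by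
  have hst : ∀ k l, star (A k l) = A l k := fun k l => by
    conv_rhs => rw [← hA]
    rfl
  have happ : ∀ (l : List (Fin n)) (s k e : Fin n),
      pathProd A s (l ++ [k]) e = pathProd A s l k * A k e := by
    intro l
    induction l with
    | nil => intro s k e; simp [pathProd]
    | cons m l ih => intro s k e; simp [pathProd, ih, mul_assoc]
  have hrev : ∀ (l : List (Fin n)) (s : Fin n),
      star (pathProd A s l e) = pathProd A e l.reverse s := by
    intro l
    induction l with
    | nil => intro s; simp [pathProd, hst]
    | cons m l ih => intro s; simp [pathProd, happ, ih, hst]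
  rw [pathSum, star_sum, pathSum]
  refine Finset.sum_bij' (fun l _ => l.reverse) (fun l _ => l.reverse) ?_ ?_ ?_ ?_ ?_
  · intro l; simp [mem_orderings]
  · intro l; simp [mem_orderings]
  · simp
  · simp
  · intro l _
    have hc : Commute ((-1 : R) ^ l.length) (pathProd A e l.reverse s) :=
      (Commute.neg_one_left _).pow_left _
    simp [hrev, hc.eq]

end Paths

/-! ### Peeling off the cycle of the largest index -/

section Cycles

variable {n : ℕ}

/-- The leaders of `σ` that lie in `S`, in decreasing order. -/
def leadersOn (S : Finset (Fin n)) (σ : Equiv.Perm (Fin n)) : List (Fin n) :=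
  (chenLeaders σ).filter (fun i => decide (i ∈ S))

lemma mem_leadersOn {S : Finset (Fin n)} {σ : Equiv.Perm (Fin n)} {x : Fin n} :
    x ∈ leadersOn S σ ↔ x ∈ S ∧ ∀ y ∈ cycleList σ x, y ≤ x := by
  simp [leadersOn, chenLeaders]

lemma pairwise_leadersOn (S : Finset (Fin n)) (σ : Equiv.Perm (Fin n)) :
    (leadersOn S σ).Pairwise (· > ·) := by
  refine List.Pairwise.filter _ ?_
  rw [chenLeaders, List.pairwise_reverse]
  exact List.Pairwise.filter _ (List.pairwise_lt_finRange n)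

lemma length_leadersOn_le (S : Finset (Fin n)) (σ : Equiv.Perm (Fin n)) :
    (leadersOn S σ).length ≤ S.card := by
  have hnd : (leadersOn S σ).Nodup := (pairwise_leadersOn S σ).imp fun h => ne_of_gt h
  rw [← List.toFinset_card_of_nodup hnd]
  exact Finset.card_le_card fun x hx => (mem_leadersOn.1 (List.mem_toFinset.1 hx)).1

lemma exists_pow_of_mem_cycleList {σ : Equiv.Perm (Fin n)} {x y : Fin n}
    (h : y ∈ cycleList σ x) : ∃ k : ℕ, y = (σ ^ k) x := by
  rcases List.mem_cons.1 h with rfl | h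
  · exact ⟨0, rfl⟩
  · obtain ⟨k, _, rfl⟩ := List.mem_map.1 ((List.takeWhile_subset _) h)
    exact ⟨k + 1, rfl⟩

lemma cycleList_congr {σ τ : Equiv.Perm (Fin n)} {x : Fin n}
    (h : ∀ k : ℕ, (σ ^ k) x = (τ ^ k) x) : cycleList σ x = cycleList τ x := by
  simp only [cycleList, h]

lemma cycleList_eq {σ : Equiv.Perm (Fin n)} {x : Fin n} {l : List (Fin n)}
    (hnd : (x :: l).Nodup)
    (h : ∀ k : ℕ, (σ ^ k) x = (x :: l)[k % (l.length + 1)]'(by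
      simpa using Nat.mod_lt _ (Nat.succ_pos _))) : cycleList σ x = x :: l := by
  have hlen : l.length + 1 ≤ n := by simpa using hnd.length_le_card
  obtain ⟨r, hr⟩ := Nat.exists_eq_add_of_le hlen
  have hmap : (List.range l.length).map (fun k => (σ ^ (k + 1)) x) = l := by
    refine List.ext_getElem (by simp) fun k h1 h2 => ?_
    simp only [List.getElem_map, List.getElem_range, h]
    simp [Nat.mod_eq_of_lt (Nat.succ_lt_succ h2)]
  have hx : (σ ^ (l.length + 1)) x = x := by rw [h]; simp
  have hxl : ∀ a ∈ l, decide (a ≠ x) = true := by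
    intro a ha
    simp only [ne_eq, decide_not, Bool.not_eq_eq_eq_not, Bool.not_true, decide_eq_false_iff_not]
    rintro rfl
    exact (List.nodup_cons.1 hnd).1 ha
  have hrange : List.range n = List.range l.length ++
      l.length :: (List.range r).map (fun k => l.length + 1 + k) := by
    refine (congrArg List.range hr).trans ?_
    rw [List.range_add, List.range_succ, List.append_assoc]
    rfl
  rw [cycleList, hrange, List.map_append, hmap, List.takeWhile_append_of_pos hxl, List.map_cons, hx,
    List.takeWhile_cons_of_neg (by simp), List.append_nil]

section FormPerm

variable {x : Fin n} {l : List (Fin n)} {τ : Equiv.Perm (Fin n)}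

lemma cycleList_formPerm_mul (hnd : (x :: l).Nodup) (hτ : ∀ y ∈ x :: l, τ y = y) :
    cycleList ((x :: l).formPerm * τ) x = x :: l := by
  have key : ∀ k : ℕ, (((x :: l).formPerm * τ) ^ k) x = ((x :: l).formPerm ^ k) x ∧
      ((x :: l).formPerm ^ k) x ∈ x :: l := by
    intro k
    induction k with
    | zero => simp
    | succ k ih =>
      constructor
      · rw [pow_succ', pow_succ', Equiv.Perm.mul_apply, Equiv.Perm.mul_apply, ih.1,
          Equiv.Perm.mul_apply, hτ _ ih.2]
      · rw [pow_succ', Equiv.Perm.mul_apply]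
        exact List.formPerm_apply_mem_of_mem ih.2
  refine cycleList_eq hnd fun k => ?_
  rw [(key k).1, List.formPerm_pow_apply_head x l hnd]
  simp

/-- The lists of the elements of one cycle are rotations of each other, so the cycle of each
vertex of the peeled list contains the vertex `x`. -/
lemma mem_cycleList_formPerm_mul (hnd : (x :: l).Nodup) (hτ : ∀ y ∈ x :: l, τ y = y)
    {y : Fin n} (hy : y ∈ l) : x ∈ cycleList ((x :: l).formPerm * τ) y := by
  obtain ⟨u, v, rfl⟩ := List.append_of_mem hy
  have hrot : (x :: (u ++ y :: v)) ~r (y :: (v ++ x :: u)) := by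
    simpa using List.isRotated_append (l := x :: u) (l' := y :: v)
  rw [List.formPerm_eq_of_isRotated hnd hrot, cycleList_formPerm_mul]
  · simp
  · exact hrot.perm.nodup_iff.1 hnd
  · exact fun z hz => hτ z (hrot.perm.mem_iff.2 hz)

lemma pow_apply_notMem (hτ : ∀ y ∈ x :: l, τ y = y) {y : Fin n} (hy : y ∉ x :: l) (k : ℕ) :
    (τ ^ k) y ∉ x :: l := by
  induction k with
  | zero => simpa using hy
  | succ k ih =>
    rw [pow_succ', Equiv.Perm.mul_apply]
    intro hmem
    have := τ.injective (hτ _ hmem)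
    rw [this] at hmem
    exact ih hmem

lemma formPerm_mul_apply_notMem (hτ : ∀ y ∈ x :: l, τ y = y) {y : Fin n} (hy : y ∉ x :: l) :
    ((x :: l).formPerm * τ) y = τ y := by
  rw [Equiv.Perm.mul_apply]
  exact List.formPerm_apply_of_notMem (by simpa using pow_apply_notMem hτ hy 1)

lemma cycleList_formPerm_mul_notMem (hτ : ∀ y ∈ x :: l, τ y = y) {y : Fin n} (hy : y ∉ x :: l) :
    cycleList ((x :: l).formPerm * τ) y = cycleList τ y := by
  refine cycleList_congr fun k => ?_
  induction k with
  | zero => rfl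
  | succ k ih =>
    rw [pow_succ', pow_succ', Equiv.Perm.mul_apply, ih,
      formPerm_mul_apply_notMem hτ (pow_apply_notMem hτ hy k), Equiv.Perm.mul_apply]

end FormPerm

lemma prod_map_of_isChain {R : Type*} [Ring R] (A : Matrix (Fin n) (Fin n) R)
    (σ : Equiv.Perm (Fin n)) (e : Fin n) (l : List (Fin n)) (s : Fin n)
    (h : List.IsChain (fun a b => σ a = b) (s :: (l ++ [e]))) :
    ((s :: l).map (fun i => A i (σ i))).prod = pathProd A s l e := by
  induction l generalizing s with
  | nil =>
    simp only [List.nil_append, List.isChain_cons_cons] at h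
    simp [pathProd, h.1]
  | cons k l ih =>
    rw [List.cons_append, List.isChain_cons_cons] at h
    rw [List.map_cons, List.prod_cons, ih k h.2, h.1, pathProd]

lemma prod_map_formPerm {R : Type*} [Ring R] (A : Matrix (Fin n) (Fin n) R) {m : Fin n}
    {l : List (Fin n)} (hnd : (m :: l).Nodup) :
    ((m :: l).map (fun i => A i ((m :: l).formPerm i))).prod = pathProd A m l m := by
  refine prod_map_of_isChain A _ m l m ?_
  rw [List.isChain_iff_getElem]
  intro i hi
  have hi' : i < (m :: l).length := by simp at hi ⊢; omega
  have h1 : (m :: (l ++ [m]))[i] = (m :: l)[i] := by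
    simp only [← List.cons_append]
    exact List.getElem_append_left hi'
  rw [h1, List.formPerm_apply_getElem _ hnd]
  rcases Nat.lt_or_ge (i + 1) (l.length + 1) with h | h
  · simp only [List.length_cons, Nat.mod_eq_of_lt h, List.getElem_cons_succ]
    rw [List.getElem_append_left (by omega)]
  · have : i = l.length := by simp at hi'; omega
    subst this
    simp

/-- The Chen sum over the permutations of the subset `S` of the indices, that is, the Chen
determinant of the principal submatrix of `A` with rows and columns in `S`. -/
def chenOn {R : Type*} [Ring R] (A : Matrix (Fin n) (Fin n) R) (S : Finset (Fin n)) : R :=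
  ∑ σ ∈ Finset.univ.filter (fun σ : Equiv.Perm (Fin n) => ∀ x ∉ S, σ x = x),
    (-1 : R) ^ (S.card - (leadersOn S σ).length) *
      (((leadersOn S σ).map (cycleList σ)).flatten.map (fun i => A i (σ i))).prod

lemma chenOn_univ {R : Type*} [Ring R] (A : Matrix (Fin n) (Fin n) R) :
    chenOn A Finset.univ = Cdet A := by
  have : ∀ σ : Equiv.Perm (Fin n), leadersOn Finset.univ σ = chenLeaders σ := by
    intro σ; simp [leadersOn]
  simp [chenOn, Cdet, this, chenOrder]

lemma chenOn_empty {R : Type*} [Ring R] (A : Matrix (Fin n) (Fin n) R) : chenOn A ∅ = 1 := by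
  have : ∀ σ : Equiv.Perm (Fin n), leadersOn ∅ σ = [] := by
    intro σ; simp [leadersOn]
  have h2 : Finset.univ.filter (fun σ : Equiv.Perm (Fin n) => ∀ x, σ x = x) = {1} := by
    ext σ; simp [Equiv.ext_iff]
  simp [chenOn, this, h2]

lemma exists_list_cycleOf (σ : Equiv.Perm (Fin n)) (m : Fin n) :
    ∃ l : List (Fin n), (m :: l).Nodup ∧ (m :: l).formPerm = σ.cycleOf m ∧
      ∀ y ∈ m :: l, σ.SameCycle m y := by
  by_cases hm : σ m = m
  · refine ⟨[], by simp, ?_, by simp [Equiv.Perm.SameCycle.refl]⟩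
    rw [List.formPerm_singleton, (Equiv.Perm.cycleOf_eq_one_iff σ).2 hm]
  · have hs : m ∈ σ.support := by simpa using hm
    have h0 := Equiv.Perm.toList_getElem_zero (p := σ) (x := m) hs
    have hnd := Equiv.Perm.nodup_toList σ m
    have hfp := Equiv.Perm.formPerm_toList σ m
    have hmem := fun y => Equiv.Perm.mem_toList_iff (p := σ) (x := m) (y := y)
    rcases hL : σ.toList m with _ | ⟨a, l⟩
    · exact absurd hs (Equiv.Perm.toList_eq_nil_iff.1 hL)
    · simp only [hL] at h0 hnd hfp hmem
      simp only [List.getElem_cons_zero] at h0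
      subst h0
      exact ⟨l, hnd, hfp, fun y hy => ((hmem y).1 hy).1⟩

/-- Expansion of the Chen sum along the cycle of the largest index `m`: a permutation of
`insert m S` is the product of a cycle `(m l)` with `l` a list without repetition in `S`, and a
permutation of the remaining elements. -/
lemma chenOn_insert_max {R : Type*} [Ring R] (A : Matrix (Fin n) (Fin n) R) {S : Finset (Fin n)}
    {m : Fin n} (hm : ∀ x ∈ S, x < m) :
    chenOn A (insert m S) = pathConv A (chenOn A) S m m := by
  have hmS : m ∉ S := fun h => lt_irrefl _ (hm m h)
  have hexp : pathConv A (chenOn A) S m m =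
      ∑ p ∈ S.powerset.sigma fun Q => orderings Q ×ˢ
          Finset.univ.filter (fun τ : Equiv.Perm (Fin n) => ∀ x ∉ S \ Q, τ x = x),
        ((-1) ^ p.2.1.length * pathProd A m p.2.1 m) *
          ((-1 : R) ^ ((S \ p.1).card - (leadersOn (S \ p.1) p.2.2).length) *
            (((leadersOn (S \ p.1) p.2.2).map (cycleList p.2.2)).flatten.map
              (fun i => A i (p.2.2 i))).prod) := by
    rw [Finset.sum_sigma]
    refine Finset.sum_congr rfl fun Q _ => ?_
    rw [pathSum, chenOn, Finset.sum_mul_sum, Finset.sum_product]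
  -- Basic facts about a pair `(l, τ)` as in the statement.
  have hfacts : ∀ (Q : Finset (Fin n)) (l : List (Fin n)) (τ : Equiv.Perm (Fin n)), Q ⊆ S →
      l ∈ orderings Q → (∀ x ∉ S \ Q, τ x = x) →
      (m :: l).Nodup ∧ ∀ y ∈ m :: l, τ y = y := by
    intro Q l τ hQ hl hτ
    rw [mem_orderings] at hl
    obtain ⟨hnd, rfl⟩ := hl
    refine ⟨List.nodup_cons.2 ⟨fun h => hmS (hQ (by simpa using h)), hnd⟩, fun y hy => hτ y ?_⟩
    rcases List.mem_cons.1 hy with rfl | hy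
    · simp [hmS]
    · simp [hy]
  rw [hexp, chenOn]
  symm
  refine Finset.sum_bij (fun p _ => (m :: p.2.1).formPerm * p.2.2) ?_ ?_ ?_ ?_
  · rintro ⟨Q, l, τ⟩ h
    simp only [Finset.mem_sigma, Finset.mem_powerset, Finset.mem_product, Finset.mem_filter,
      Finset.mem_univ, true_and] at h ⊢
    obtain ⟨hQ, hl, hτ⟩ := h
    intro x hx
    have hxl : x ∉ m :: l := by
      rw [mem_orderings] at hl
      obtain ⟨_, rfl⟩ := hl
      intro h
      apply hx
      rcases List.mem_cons.1 h with rfl | h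
      · simp
      · exact Finset.mem_insert_of_mem (hQ (by simpa using h))
    rw [Equiv.Perm.mul_apply, hτ x (fun h => hx (by simp at h; simp [h])),
      List.formPerm_apply_of_notMem hxl]
  · rintro ⟨Q, l, τ⟩ h ⟨Q', l', τ'⟩ h' heq
    simp only [Finset.mem_sigma, Finset.mem_powerset, Finset.mem_product, Finset.mem_filter,
      Finset.mem_univ, true_and] at h h' heq
    obtain ⟨hQ, hl, hτ⟩ := h
    obtain ⟨hQ', hl', hτ'⟩ := h'
    obtain ⟨h1, h2⟩ := hfacts Q l τ hQ hl hτ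
    obtain ⟨h1', h2'⟩ := hfacts Q' l' τ' hQ' hl' hτ'
    have hll : m :: l = m :: l' := by
      rw [← cycleList_formPerm_mul h1 h2, heq, cycleList_formPerm_mul h1' h2']
    obtain rfl : l = l' := by simpa using hll
    obtain rfl : τ = τ' := mul_left_cancel heq
    rw [mem_orderings] at hl hl'
    obtain rfl : Q = Q' := by rw [← hl.2, ← hl'.2]
    rfl
  · intro σ hσ
    simp only [Finset.mem_filter, Finset.mem_univ, true_and] at hσ
    obtain ⟨l, hnd, hfp, hsame⟩ := exists_list_cycleOf σ m
    have hnd' := List.nodup_cons.1 hnd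
    have hlS : l.toFinset ⊆ S := by
      intro y hy
      rw [List.mem_toFinset] at hy
      by_contra hyS
      have hym : y ≠ m := fun h => hnd'.1 (h ▸ hy)
      have hfix : Function.IsFixedPt σ y := hσ y (by simp [hym, hyS])
      exact hym ((hsame y (List.mem_cons_of_mem _ hy)).eq_of_right hfix).symm
    refine ⟨⟨l.toFinset, l, (σ.cycleOf m)⁻¹ * σ⟩, ?_, ?_⟩
    · simp only [Finset.mem_sigma, Finset.mem_powerset, Finset.mem_product, Finset.mem_filter,
        Finset.mem_univ, true_and, mem_orderings]
      refine ⟨hlS, ⟨hnd'.2, trivial⟩, fun x hx => ?_⟩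
      have hcyc : σ.cycleOf m x = σ x := by
        rw [Equiv.Perm.cycleOf_apply]
        split_ifs with hsc
        · rfl
        · have hxl : x ∉ m :: l := fun h => hsc (hsame x h)
          simp only [List.mem_cons, not_or] at hxl
          rw [hσ x]
          simp only [Finset.mem_insert, hxl.1, false_or]
          intro hxS
          exact hx (by simp [hxS, hxl.2])
      rw [Equiv.Perm.mul_apply, ← hcyc]
      simp
    · simp only [hfp, mul_inv_cancel_left]
  · rintro ⟨Q, l, τ⟩ h
    simp only [Finset.mem_sigma, Finset.mem_powerset, Finset.mem_product, Finset.mem_filter,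
      Finset.mem_univ, true_and] at h ⊢
    obtain ⟨hQ, hl, hτ⟩ := h
    obtain ⟨hnd, hfix⟩ := hfacts Q l τ hQ hl hτ
    have hlQ := (mem_orderings.1 hl).2
    have hnot : ∀ x ∈ S \ Q, x ∉ m :: l := by
      intro x hx
      simp only [Finset.mem_sdiff, ← hlQ, List.mem_toFinset] at hx
      simp only [List.mem_cons, not_or]
      exact ⟨fun h => hmS (h ▸ hx.1), hx.2⟩
    have hlead : leadersOn (insert m S) ((m :: l).formPerm * τ) = m :: leadersOn (S \ Q) τ := by
      refine List.Pairwise.eq_of_mem_iff (pairwise_leadersOn _ _)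
        (List.pairwise_cons.2 ⟨fun x hx => ?_, pairwise_leadersOn _ _⟩) ?_
      · exact hm x (Finset.mem_sdiff.1 (mem_leadersOn.1 hx).1).1
      · intro x
        rw [List.mem_cons, mem_leadersOn, mem_leadersOn, Finset.mem_insert]
        constructor
        · rintro ⟨rfl | hxS, hle⟩
          · exact Or.inl rfl
          · right
            have hxl : x ∉ l := fun hxl => by
              have := hle m (mem_cycleList_formPerm_mul hnd hfix hxl)
              exact absurd (hm x hxS) (not_lt.2 this)
            have hx : x ∈ S \ Q := by
              rw [← hlQ]; simp [hxS, hxl]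
            rw [cycleList_formPerm_mul_notMem hfix (hnot x hx)] at hle
            exact ⟨hx, hle⟩
        · rintro (rfl | ⟨hx, hle⟩)
          · refine ⟨Or.inl rfl, fun y hy => ?_⟩
            rw [cycleList_formPerm_mul hnd hfix] at hy
            rcases List.mem_cons.1 hy with rfl | hy
            · exact le_rfl
            · exact (hm y (hQ (by rw [← hlQ]; simpa using hy))).le
          · rw [cycleList_formPerm_mul_notMem hfix (hnot x hx)]
            exact ⟨Or.inr (Finset.mem_sdiff.1 hx).1, hle⟩
    have hcycles : (leadersOn (S \ Q) τ).map (cycleList ((m :: l).formPerm * τ)) =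
        (leadersOn (S \ Q) τ).map (cycleList τ) :=
      List.map_congr_left fun x hx =>
        cycleList_formPerm_mul_notMem hfix (hnot x (mem_leadersOn.1 hx).1)
    have hrest : ((leadersOn (S \ Q) τ).map (cycleList τ)).flatten.map
          (fun i => A i (((m :: l).formPerm * τ) i)) =
        ((leadersOn (S \ Q) τ).map (cycleList τ)).flatten.map (fun i => A i (τ i)) := by
      refine List.map_congr_left fun i hi => ?_
      simp only [List.mem_flatten, List.mem_map, exists_exists_and_eq_and] at hi
      obtain ⟨x, hx, hi⟩ := hi
      obtain ⟨k, rfl⟩ := exists_pow_of_mem_cycleList hi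
      rw [formPerm_mul_apply_notMem hfix
        (pow_apply_notMem hfix (hnot x (mem_leadersOn.1 hx).1) k)]
    have hfirst : (m :: l).map (fun i => A i (((m :: l).formPerm * τ) i)) =
        (m :: l).map (fun i => A i ((m :: l).formPerm i)) :=
      List.map_congr_left fun i hi => by rw [Equiv.Perm.mul_apply, hfix i hi]
    have hQl : Q.card = l.length := by
      rw [← hlQ, List.toFinset_card_of_nodup (List.nodup_cons.1 hnd).2]
    have hexpo : (insert m S).card - (m :: leadersOn (S \ Q) τ).length =
        l.length + ((S \ Q).card - (leadersOn (S \ Q) τ).length) := by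
      have h1 := length_leadersOn_le (S \ Q) τ
      have h2 := Finset.card_sdiff_add_card_eq_card hQ
      rw [Finset.card_insert_of_notMem hmS, List.length_cons]
      omega
    rw [hlead, hexpo, List.map_cons, List.flatten_cons, List.map_append, List.prod_append,
      hcycles, hrest, cycleList_formPerm_mul hnd hfix, hfirst, prod_map_formPerm A hnd, pow_add]
    have hc : Commute ((-1 : R) ^ ((S \ Q).card - (leadersOn (S \ Q) τ).length))
        (pathProd A m l m) := (Commute.neg_one_left _).pow_left _
    simp only [mul_assoc]
    rw [← mul_assoc (pathProd A m l m), ← hc.eq, mul_assoc]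

end Cycles

/-! ### Hermitian quaternion matrices: independence of the order -/

section Hermitian

variable {n : ℕ}

lemma commute_of_star_eq {x : ℍ[ℝ]} (hx : star x = x) (y : ℍ[ℝ]) : Commute x y := by
  rw [Quaternion.star_eq_self.1 hx]
  exact Quaternion.coe_commute _ _

lemma re_mul_comm (x y : ℍ[ℝ]) : (x * y).re = (y * x).re := by
  simp only [Quaternion.re_mul]
  ring

lemma re_finset_sum {ι : Type*} (s : Finset ι) (f : ι → ℍ[ℝ]) :
    (∑ i ∈ s, f i).re = ∑ i ∈ s, (f i).re := by
  classical
  induction s using Finset.induction_on with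
  | empty => simp
  | insert a s ha ih => rw [Finset.sum_insert ha, Finset.sum_insert ha, Quaternion.re_add, ih]

lemma re_natCast_mul (k : ℕ) (x : ℍ[ℝ]) : ((k : ℍ[ℝ]) * x).re = k * x.re := by
  rw [← Quaternion.coe_natCast, Quaternion.coe_mul_eq_smul, Quaternion.re_smul, smul_eq_mul]

lemma sum_powerset_powerset {M : Type*} [AddCommMonoid M] (T : Finset (Fin n))
    (f : Finset (Fin n) → Finset (Fin n) → M) :
    ∑ Q ∈ T.powerset, ∑ C ∈ Q.powerset, f C (Q \ C) =
      ∑ C ∈ T.powerset, ∑ P ∈ (T \ C).powerset, f C P := by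
  rw [Finset.sum_sigma', Finset.sum_sigma']
  refine Finset.sum_bij' (fun p _ => ⟨p.2, p.1 \ p.2⟩) (fun p _ => ⟨p.1 ∪ p.2, p.1⟩)
    ?_ ?_ ?_ ?_ ?_
  · rintro ⟨Q, C⟩ h
    simp only [Finset.mem_sigma, Finset.mem_powerset] at h ⊢
    exact ⟨h.2.trans h.1, Finset.sdiff_subset_sdiff h.1 le_rfl⟩
  · rintro ⟨C, P⟩ h
    simp only [Finset.mem_sigma, Finset.mem_powerset] at h ⊢
    exact ⟨Finset.union_subset h.1 (h.2.trans Finset.sdiff_subset), Finset.subset_union_left⟩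
  · rintro ⟨Q, C⟩ h
    simp only [Finset.mem_sigma, Finset.mem_powerset] at h
    simp [Finset.union_sdiff_of_subset h.2]
  · rintro ⟨C, P⟩ h
    simp only [Finset.mem_sigma, Finset.mem_powerset] at h
    have hd : Disjoint P C := Finset.disjoint_of_subset_left h.2 Finset.sdiff_disjoint
    simp [Finset.union_sdiff_left, Finset.sdiff_eq_self_of_disjoint hd]
  · simp

lemma sum_powerset_sdiff_comm {M : Type*} [AddCommMonoid M] (T : Finset (Fin n))
    (f : Finset (Fin n) → Finset (Fin n) → M) :
    ∑ Q ∈ T.powerset, ∑ C ∈ (T \ Q).powerset, f Q C =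
      ∑ C ∈ T.powerset, ∑ Q ∈ (T \ C).powerset, f Q C := by
  refine Finset.sum_comm' fun Q C => ?_
  simp only [Finset.mem_powerset, Finset.subset_sdiff]
  exact ⟨fun h => ⟨⟨h.1, h.2.2.symm⟩, h.2.1⟩, fun h => ⟨h.1.1, h.2, h.1.2.symm⟩⟩

lemma eq_insert_max (S : Finset (Fin n)) (hS : S.Nonempty) :
    ∃ m T, S = insert m T ∧ ∀ x ∈ T, x < m := by
  refine ⟨S.max' hS, S.erase (S.max' hS), (Finset.insert_erase (S.max'_mem hS)).symm, ?_⟩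
  intro x hx
  exact lt_of_le_of_ne (S.le_max' x (Finset.mem_of_mem_erase hx)) (Finset.ne_of_mem_erase hx)

/-- `chenOn A S` only depends on the entries of `A` with both indices in `S`. -/
lemma chenOn_congr {R : Type*} [Ring R] {A B : Matrix (Fin n) (Fin n) R} (S : Finset (Fin n))
    (h : ∀ k ∈ S, ∀ l ∈ S, B k l = A k l) : chenOn B S = chenOn A S := by
  induction S using Finset.strongInduction with
  | H S ih =>
    rcases S.eq_empty_or_nonempty with rfl | hne
    · rw [chenOn_empty, chenOn_empty]
    · obtain ⟨m, T, rfl, hm⟩ := eq_insert_max S hne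
      have hmT : m ∉ T := fun h => lt_irrefl _ (hm m h)
      rw [chenOn_insert_max B hm, chenOn_insert_max A hm]
      refine Finset.sum_congr rfl fun Q hQ => ?_
      have hQ := Finset.mem_powerset.1 hQ
      rw [pathSum_congr _ h Q (hQ.trans (Finset.subset_insert _ _)) (Finset.mem_insert_self _ _)
        (Finset.mem_insert_self _ _)]
      have hsub : T \ Q ⊆ insert m T := Finset.sdiff_subset.trans (Finset.subset_insert _ _)
      rw [ih (T \ Q) (lt_of_le_of_lt Finset.sdiff_subset (Finset.ssubset_insert hmT))
        fun k hk l hl => h k (hsub hk) l (hsub hl)]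

variable {A : Matrix (Fin n) (Fin n) ℍ[ℝ]}

lemma star_chenOn (hA : Aᴴ = A) (S : Finset (Fin n)) : star (chenOn A S) = chenOn A S := by
  induction S using Finset.strongInduction with
  | H S ih =>
    rcases S.eq_empty_or_nonempty with rfl | hne
    · rw [chenOn_empty, star_one]
    · obtain ⟨m, T, rfl, hm⟩ := eq_insert_max S hne
      have hmT : m ∉ T := fun h => lt_irrefl _ (hm m h)
      rw [chenOn_insert_max A hm, pathConv, star_sum]
      refine Finset.sum_congr rfl fun Q _ => ?_
      rw [star_mul, star_pathSum hA,
        ih (T \ Q) (lt_of_le_of_lt Finset.sdiff_subset (Finset.ssubset_insert hmT))]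
      exact (commute_of_star_eq (star_pathSum hA Q m m) _).eq.symm

/-- The cycle sum over a vertex set does not depend on the starting vertex: it is real, and the
real part of a product of quaternions is invariant under cyclic rotation. -/
lemma pathSum_base_change (hA : Aᴴ = A) {m m' : Fin n} {Q : Finset (Fin n)} (hm : m ∉ Q)
    (hm' : m' ∉ Q) : pathSum A (insert m' Q) m m = pathSum A (insert m Q) m' m' := by
  rw [Quaternion.star_eq_self.1 (star_pathSum hA (insert m' Q) m m),
    Quaternion.star_eq_self.1 (star_pathSum hA (insert m Q) m' m')]
  congr 1
  rw [pathSum_insert A m' m Q hm' m, pathSum_insert A m m' Q hm m', Quaternion.re_neg,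
    Quaternion.re_neg, pathConv, pathConv, re_finset_sum, re_finset_sum]
  congr 1
  refine Finset.sum_bij' (fun C _ => Q \ C) (fun C _ => Q \ C) ?_ ?_ ?_ ?_ ?_
  · intro C _; simp
  · intro C _; simp
  · intro C hC; exact Finset.sdiff_sdiff_eq_self (Finset.mem_powerset.1 hC)
  · intro C hC; exact Finset.sdiff_sdiff_eq_self (Finset.mem_powerset.1 hC)
  · intro C hC
    rw [re_mul_comm, Finset.sdiff_sdiff_eq_self (Finset.mem_powerset.1 hC)]

/-- For a Hermitian matrix the Chen sum can be expanded along the cycle of any index, not only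
the largest one. -/
lemma chenOn_insert (hA : Aᴴ = A) (S : Finset (Fin n)) (m : Fin n) (hmS : m ∉ S) :
    chenOn A (insert m S) = pathConv A (chenOn A) S m m := by
  induction S using Finset.strongInduction generalizing m with
  | H S ih =>
    rcases S.eq_empty_or_nonempty with rfl | hne
    · exact chenOn_insert_max A (by simp)
    obtain ⟨M, T, rfl, hM⟩ := eq_insert_max S hne
    have hMT : M ∉ T := fun h => lt_irrefl _ (hM M h)
    simp only [Finset.mem_insert, not_or] at hmS
    obtain ⟨hmM, hmT⟩ := hmS
    rcases lt_or_gt_of_ne hmM with hlt | hgt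
    · have hM' : ∀ x ∈ insert m T, x < M := by
        intro x hx
        rcases Finset.mem_insert.1 hx with rfl | hx
        exacts [hlt, hM x hx]
      rw [Finset.insert_comm, chenOn_insert_max A hM', pathConv, pathConv,
        Finset.sum_powerset_insert hmT, Finset.sum_powerset_insert hMT]
      congr 1
      · have e1 : ∀ Q ∈ T.powerset, pathSum A Q M M * chenOn A (insert m T \ Q) =
            ∑ C ∈ (T \ Q).powerset,
              pathSum A Q M M * (pathSum A C m m * chenOn A (T \ (Q ∪ C))) := by
          intro Q hQ
          have hQ := Finset.mem_powerset.1 hQ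
          rw [Finset.insert_sdiff_of_notMem _ (fun h => hmT (hQ h)),
            ih (T \ Q) (lt_of_le_of_lt Finset.sdiff_subset (Finset.ssubset_insert hMT)) m
              (by simp [hmT]), pathConv, Finset.mul_sum]
          simp only [sdiff_sdiff_left, Finset.sup_eq_union]
        have e2 : ∀ Q ∈ T.powerset, pathSum A Q m m * chenOn A (insert M T \ Q) =
            ∑ C ∈ (T \ Q).powerset,
              pathSum A C M M * (pathSum A Q m m * chenOn A (T \ (C ∪ Q))) := by
          intro Q hQ
          have hQ := Finset.mem_powerset.1 hQ
          rw [Finset.insert_sdiff_of_notMem _ (fun h => hMT (hQ h)),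
            chenOn_insert_max A (fun x hx => hM x (Finset.mem_sdiff.1 hx).1), pathConv,
            Finset.mul_sum]
          refine Finset.sum_congr rfl fun C _ => ?_
          rw [sdiff_sdiff_left, Finset.sup_eq_union, Finset.union_comm Q C, ← mul_assoc,
            ← mul_assoc, (commute_of_star_eq (star_pathSum hA Q m m) _).eq]
        rw [Finset.sum_congr rfl e1, Finset.sum_congr rfl e2]
        exact sum_powerset_sdiff_comm T fun Q C =>
          pathSum A Q M M * (pathSum A C m m * chenOn A (T \ (Q ∪ C)))
      · refine Finset.sum_congr rfl fun Q hQ => ?_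
        have hQ := Finset.mem_powerset.1 hQ
        rw [pathSum_base_change hA (fun h => hMT (hQ h)) (fun h => hmT (hQ h)),
          Finset.insert_sdiff_insert, Finset.insert_sdiff_insert,
          Finset.sdiff_insert_of_notMem hmT, Finset.sdiff_insert_of_notMem hMT]
    · refine chenOn_insert_max A fun x hx => ?_
      rcases Finset.mem_insert.1 hx with rfl | hx
      exacts [hgt, (hM x hx).trans hgt]

/-- The noncommutative version of the vanishing of a determinant with two equal rows. A path from
`j` to `e` together with a cycle through `j` in its complement can be joined at `j` to a walk that
passes through `j` a second time, with opposite sign; the two products differ only by the order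
of the factors, and the sum over the cycles through `j` is real. -/
lemma pathConv_eq_zero (hA : Aᴴ = A) {S : Finset (Fin n)} {j : Fin n} (hj : j ∈ S) (e : Fin n) :
    pathConv A (chenOn A) S j e = 0 := by
  obtain ⟨T, hjT, rfl⟩ : ∃ T, j ∉ T ∧ S = insert j T :=
    ⟨S.erase j, by simp, (Finset.insert_erase hj).symm⟩
  rw [pathConv, Finset.sum_powerset_insert hjT]
  have e1 : ∀ Q ∈ T.powerset, pathSum A Q j e * chenOn A (insert j T \ Q) =
      ∑ C ∈ (T \ Q).powerset,
        pathSum A C j j * pathSum A Q j e * chenOn A (T \ (C ∪ Q)) := by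
    intro Q hQ
    have hQ := Finset.mem_powerset.1 hQ
    rw [← (commute_of_star_eq (star_chenOn hA _) _).eq,
      Finset.insert_sdiff_of_notMem _ (fun h => hjT (hQ h)),
      chenOn_insert hA _ _ (by simp [hjT]), pathConv, Finset.sum_mul]
    refine Finset.sum_congr rfl fun C _ => ?_
    rw [sdiff_sdiff_left, Finset.sup_eq_union, Finset.union_comm Q C, mul_assoc,
      (commute_of_star_eq (star_chenOn hA _) _).eq, mul_assoc]
  have e2 : ∀ Q ∈ T.powerset, pathSum A (insert j Q) j e * chenOn A (insert j T \ insert j Q) =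
      -∑ C ∈ Q.powerset,
        pathSum A C j j * pathSum A (Q \ C) j e * chenOn A (T \ (C ∪ (Q \ C))) := by
    intro Q hQ
    have hQ := Finset.mem_powerset.1 hQ
    rw [pathSum_insert A j e Q (fun h => hjT (hQ h)), neg_mul, pathConv, Finset.sum_mul,
      Finset.insert_sdiff_insert, Finset.sdiff_insert_of_notMem hjT]
    congr 1
    refine Finset.sum_congr rfl fun C hC => ?_
    rw [Finset.union_sdiff_of_subset (Finset.mem_powerset.1 hC)]
  rw [Finset.sum_congr rfl e1, Finset.sum_congr rfl e2, Finset.sum_neg_distrib,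
    sum_powerset_powerset T fun C P => pathSum A C j j * pathSum A P j e * chenOn A (T \ (C ∪ P)),
    sum_powerset_sdiff_comm T fun Q C =>
      pathSum A C j j * pathSum A Q j e * chenOn A (T \ (C ∪ Q))]
  exact add_neg_cancel _

lemma star_pathConv (hA : Aᴴ = A) (S : Finset (Fin n)) (s e : Fin n) :
    star (pathConv A (chenOn A) S s e) = pathConv A (chenOn A) S e s := by
  rw [pathConv, star_sum]
  refine Finset.sum_congr rfl fun Q _ => ?_
  rw [star_mul, star_pathSum hA, star_chenOn hA, (commute_of_star_eq (star_chenOn hA _) _).eq]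

/-! ### Replacing one row and one column -/

/-- If `B` arises from `A` by replacing column `i` by a right combination of columns `i` and `j`,
and row `i` by a left combination of rows `i` and `j`, then the path sums from `i` to `i` change
accordingly. -/
lemma pathConv_combination (hA : Aᴴ = A) {B : Matrix (Fin n) (Fin n) ℍ[ℝ]} {i j : Fin n}
    {a b a' b' : ℍ[ℝ]}
    (h0 : ∀ k l, k ≠ i → l ≠ i → B k l = A k l)
    (hcol : ∀ k, k ≠ i → B k i = A k i * a + A k j * b)
    (hrow : ∀ l, l ≠ i → B i l = a' * A i l + b' * A j l)
    (hii : B i i = a' * A i i * a + a' * A i j * b + b' * A j i * a + b' * A j j * b)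
    {S : Finset (Fin n)} (hS : i ∉ S) :
    pathConv B (chenOn A) S i i =
      a' * pathConv A (chenOn A) S i i * a + a' * pathConv A (chenOn A) S i j * b +
        b' * pathConv A (chenOn A) S j i * a + b' * pathConv A (chenOn A) S j j * b := by
  have h1 : ∀ Q : Finset (Fin n), i ∉ Q → ∀ s, s ≠ i →
      pathSum B Q s i = pathSum A Q s i * a + pathSum A Q s j * b := by
    intro Q
    induction Q using Finset.strongInduction with
    | H Q ih =>
      intro hQ s hs
      rcases Q.eq_empty_or_nonempty with rfl | hne
      · simp only [pathSum_empty, hcol s hs]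
      · rw [pathSum_of_nonempty B hne, pathSum_of_nonempty A hne, pathSum_of_nonempty A hne,
          neg_mul, neg_mul, Finset.sum_mul, Finset.sum_mul, ← neg_add, ← Finset.sum_add_distrib]
        congr 1
        refine Finset.sum_congr rfl fun k hk => ?_
        have hki : k ≠ i := fun h => hQ (h ▸ hk)
        rw [ih _ (Finset.erase_ssubset hk) (by simp [hQ]) k hki, h0 s k hs hki]
        noncomm_ring
  have h2 : ∀ Q : Finset (Fin n), i ∉ Q → pathSum B Q i i =
      a' * pathSum A Q i i * a + a' * pathSum A Q i j * b + b' * pathSum A Q j i * a +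
        b' * pathSum A Q j j * b := by
    intro Q hQ
    rcases Q.eq_empty_or_nonempty with rfl | hne
    · simp only [pathSum_empty, hii]
    · simp only [pathSum_of_nonempty _ hne, mul_neg, neg_mul, Finset.sum_mul, Finset.mul_sum,
        ← neg_add, ← Finset.sum_add_distrib]
      congr 1
      refine Finset.sum_congr rfl fun k hk => ?_
      have hki : k ≠ i := fun h => hQ (h ▸ hk)
      rw [h1 _ (by simp [hQ]) k hki, hrow k hki]
      noncomm_ring
  simp only [pathConv, Finset.mul_sum, Finset.sum_mul, ← Finset.sum_add_distrib]
  refine Finset.sum_congr rfl fun Q hQ => ?_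
  rw [h2 Q fun h => hS (Finset.mem_powerset.1 hQ h), add_mul, add_mul, add_mul]
  have hc := fun y => (commute_of_star_eq (star_chenOn hA (S \ Q)) y).eq
  simp only [mul_assoc, hc]

lemma pathConv_congr_weight {R : Type*} [Ring R] (B : Matrix (Fin n) (Fin n) R)
    {v w : Finset (Fin n) → R} {S : Finset (Fin n)} (h : ∀ T ⊆ S, v T = w T) (s e : Fin n) :
    pathConv B v S s e = pathConv B w S s e :=
  Finset.sum_congr rfl fun Q _ => by rw [h _ Finset.sdiff_subset]

lemma Cdet_eq_pathConv (hA : Aᴴ = A) (i : Fin n) :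
    Cdet A = pathConv A (chenOn A) (Finset.univ.erase i) i i := by
  rw [← chenOn_insert hA _ _ (by simp), Finset.insert_erase (Finset.mem_univ _), chenOn_univ]

lemma star_Cdet (hA : Aᴴ = A) : star (Cdet A) = Cdet A := by
  rw [← chenOn_univ, star_chenOn hA]

lemma chenOn_of_agree {R : Type*} [Ring R] {A B : Matrix (Fin n) (Fin n) R} {i : Fin n}
    (h0 : ∀ k l, k ≠ i → l ≠ i → B k l = A k l) :
    ∀ T ⊆ Finset.univ.erase i, chenOn B T = chenOn A T := by
  intro T hT
  have hne : ∀ k ∈ T, k ≠ i := fun k hk => Finset.ne_of_mem_erase (hT hk)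
  exact chenOn_congr T fun k hk l hl => h0 k l (hne k hk) (hne l hl)

/-! ### The Faddeev–LeVerrier recursion -/

/-- The sum of the principal Chen minors of size `r`. -/
def minorSum (A : Matrix (Fin n) (Fin n) ℍ[ℝ]) (r : ℕ) : ℍ[ℝ] :=
  ∑ S ∈ Finset.powersetCard r Finset.univ, chenOn A S

/-- The matrices of the Faddeev–LeVerrier recursion: the `(s, e)` entry collects all weighted
simple paths from `s` to `e` inside the `r`-element sets. -/
def pathMatrix (A : Matrix (Fin n) (Fin n) ℍ[ℝ]) (r : ℕ) : Matrix (Fin n) (Fin n) ℍ[ℝ] :=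
  Matrix.of fun s e => ∑ S ∈ Finset.powersetCard r Finset.univ, pathConv A (chenOn A) S s e

lemma sum_powersetCard_succ {M : Type*} [AddCommMonoid M] (r : ℕ)
    (f : Fin n → Finset (Fin n) → M) :
    ∑ S ∈ Finset.powersetCard (r + 1) Finset.univ, ∑ k ∈ S, f k (S.erase k) =
      ∑ k, ∑ S ∈ Finset.powersetCard r Finset.univ, if k ∈ S then 0 else f k S := by
  have hite : ∀ k : Fin n, (∑ S ∈ Finset.powersetCard r Finset.univ, if k ∈ S then 0 else f k S) =
      ∑ S ∈ (Finset.powersetCard r Finset.univ).filter (fun S => k ∉ S), f k S := by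
    intro k
    rw [Finset.sum_filter]
    exact Finset.sum_congr rfl fun S _ => (ite_not _ _ _).symm
  simp only [hite]
  rw [Finset.sum_sigma', Finset.sum_sigma']
  refine Finset.sum_bij' (fun p _ => ⟨p.2, p.1.erase p.2⟩) (fun p _ => ⟨insert p.1 p.2, p.1⟩)
    ?_ ?_ ?_ ?_ ?_
  · rintro ⟨S, k⟩ h
    simp only [Finset.mem_sigma, Finset.mem_powersetCard_univ, Finset.mem_filter, Finset.mem_univ,
      true_and] at h ⊢
    refine ⟨?_, by simp⟩
    rw [Finset.card_erase_of_mem h.2, h.1]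
    rfl
  · rintro ⟨k, S⟩ h
    simp only [Finset.mem_sigma, Finset.mem_powersetCard_univ, Finset.mem_filter, Finset.mem_univ,
      true_and] at h ⊢
    exact ⟨by rw [Finset.card_insert_of_notMem h.2, h.1], Finset.mem_insert_self _ _⟩
  · rintro ⟨S, k⟩ h
    simp only [Finset.mem_sigma] at h
    simp [Finset.insert_erase h.2]
  · rintro ⟨k, S⟩ h
    simp only [Finset.mem_sigma, Finset.mem_filter] at h
    simp [Finset.erase_insert h.2.2]
  · rintro ⟨S, k⟩ h
    rfl

lemma minorSum_eq_coe (hA : Aᴴ = A) (r : ℕ) : minorSum A r = ((minorSum A r).re : ℍ[ℝ]) := by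
  rw [← Quaternion.star_eq_self, minorSum, star_sum]
  exact Finset.sum_congr rfl fun S _ => star_chenOn hA S

lemma pathMatrix_zero : pathMatrix A 0 = A := by
  ext1 s e
  simp [pathMatrix, pathConv, pathSum_empty, chenOn_empty]

lemma pathMatrix_succ (hA : Aᴴ = A) (r : ℕ) :
    pathMatrix A (r + 1) = (minorSum A (r + 1)).re • A - A * pathMatrix A r := by
  ext1 s e
  simp only [pathMatrix, Matrix.of_apply, Matrix.sub_apply, Matrix.smul_apply, Matrix.mul_apply]
  rw [← Quaternion.coe_mul_eq_smul, ← minorSum_eq_coe hA, minorSum, Finset.sum_mul,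
    Finset.sum_congr rfl fun S _ => pathConv_rec A (chenOn A) S s e, Finset.sum_sub_distrib,
    sum_powersetCard_succ r fun k S => A s k * pathConv A (chenOn A) S k e]
  congr 1
  · exact Finset.sum_congr rfl fun S _ => (commute_of_star_eq (star_chenOn hA S) _).eq.symm
  · refine Finset.sum_congr rfl fun k _ => ?_
    rw [Finset.mul_sum]
    refine Finset.sum_congr rfl fun S _ => ?_
    split_ifs with hk
    · rw [pathConv_eq_zero hA hk, mul_zero]
    · rfl

lemma trace_pathMatrix (hA : Aᴴ = A) (r : ℕ) :
    (pathMatrix A r).trace = (r + 1 : ℕ) * minorSum A (r + 1) := by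
  have h : ∀ k, (pathMatrix A r).diag k = ∑ S ∈ Finset.powersetCard r Finset.univ,
      if k ∈ S then 0 else chenOn A (insert k S) := by
    intro k
    rw [Matrix.diag_apply, pathMatrix, Matrix.of_apply]
    refine Finset.sum_congr rfl fun S _ => ?_
    split_ifs with hk
    · exact pathConv_eq_zero hA hk k
    · exact (chenOn_insert hA S k hk).symm
  rw [Matrix.trace, Finset.sum_congr rfl fun k _ => h k,
    ← sum_powersetCard_succ r fun k S => chenOn A (insert k S), minorSum, Finset.mul_sum]
  refine Finset.sum_congr rfl fun S hS => ?_
  have hk : ∀ k ∈ S, chenOn A (insert k (S.erase k)) = chenOn A S := fun k hk => by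
    rw [Finset.insert_erase hk]
  rw [Finset.sum_congr rfl hk, Finset.sum_const, Finset.mem_powersetCard_univ.1 hS, nsmul_eq_mul]

lemma re_trace_mul_comm (X Y : Matrix (Fin n) (Fin n) ℍ[ℝ]) :
    (X * Y).trace.re = (Y * X).trace.re := by
  simp only [Matrix.trace, Matrix.diag_apply, Matrix.mul_apply, re_finset_sum]
  rw [Finset.sum_comm]
  exact Finset.sum_congr rfl fun i _ => Finset.sum_congr rfl fun j _ => re_mul_comm _ _

/-- Unitary invariance: the recursion expresses the minor sums through real parts of traces. -/
lemma Cdet_unitary (hA : Aᴴ = A) {U : Matrix (Fin n) (Fin n) ℍ[ℝ]} (hU : Uᴴ * U = 1) :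
    Cdet (Uᴴ * A * U) = Cdet A := by
  have hU' : U * Uᴴ = 1 := mul_eq_one_symm hU
  have hB : (Uᴴ * A * U)ᴴ = Uᴴ * A * U := by
    simp [Matrix.conjTranspose_mul, hA, Matrix.mul_assoc]
  have hminor : ∀ r, pathMatrix (Uᴴ * A * U) r = Uᴴ * pathMatrix A r * U →
      minorSum (Uᴴ * A * U) (r + 1) = minorSum A (r + 1) := by
    intro r hr
    have h1 : ((pathMatrix (Uᴴ * A * U) r).trace).re = ((pathMatrix A r).trace).re := by
      rw [hr, re_trace_mul_comm, ← Matrix.mul_assoc, hU', Matrix.one_mul]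
    rw [trace_pathMatrix hB, trace_pathMatrix hA, re_natCast_mul, re_natCast_mul] at h1
    rw [minorSum_eq_coe hB, minorSum_eq_coe hA]
    congr 1
    exact mul_left_cancel₀ (Nat.cast_ne_zero.2 (Nat.succ_ne_zero r)) h1
  have hpath : ∀ r, pathMatrix (Uᴴ * A * U) r = Uᴴ * pathMatrix A r * U := by
    intro r
    induction r with
    | zero => rw [pathMatrix_zero, pathMatrix_zero]
    | succ r ih =>
      have hmid : Uᴴ * A * U * (Uᴴ * pathMatrix A r * U) = Uᴴ * (A * pathMatrix A r) * U := by
        calc Uᴴ * A * U * (Uᴴ * pathMatrix A r * U)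
            = Uᴴ * A * (U * Uᴴ) * pathMatrix A r * U := by simp only [Matrix.mul_assoc]
          _ = Uᴴ * (A * pathMatrix A r) * U := by
              rw [hU', Matrix.mul_one]; simp only [Matrix.mul_assoc]
      rw [pathMatrix_succ hB, pathMatrix_succ hA, hminor r ih, ih, hmid, Matrix.mul_sub,
        Matrix.sub_mul, Matrix.mul_smul, Matrix.smul_mul]
  have hC : ∀ X : Matrix (Fin n) (Fin n) ℍ[ℝ], minorSum X n = Cdet X := by
    intro X
    have : Finset.powersetCard n (Finset.univ : Finset (Fin n)) = {Finset.univ} := by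
      simpa using Finset.powersetCard_self (Finset.univ : Finset (Fin n))
    rw [minorSum, this, Finset.sum_singleton, chenOn_univ]
  rw [← hC, ← hC]
  cases n with
  | zero => simp [minorSum, chenOn_empty]
  | succ r => exact hminor r (hpath r)

end Hermitian

/-! ### Elementary matrices -/

section Elementary

variable {n : ℕ}

lemma mulMatrix_mul_apply (i : Fin n) (c : ℍ[ℝ]) (A : Matrix (Fin n) (Fin n) ℍ[ℝ]) (k l : Fin n) :
    (mulMatrix i c * A) k l = (if k = i then c else 1) * A k l := by
  simp [mulMatrix, Matrix.mul_apply]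

lemma mul_mulMatrix_apply (i : Fin n) (c : ℍ[ℝ]) (A : Matrix (Fin n) (Fin n) ℍ[ℝ]) (k l : Fin n) :
    (A * mulMatrix i c) k l = A k l * (if l = i then c else 1) := by
  simp [mulMatrix, Matrix.mul_apply]

lemma conjTranspose_mulMatrix (i : Fin n) (c : ℍ[ℝ]) :
    (mulMatrix i c)ᴴ = mulMatrix i (star c) := by
  ext1 k l
  rcases eq_or_ne k l with rfl | h
  · by_cases hk : k = i <;> simp [mulMatrix, hk]
  · simp [mulMatrix, h, h.symm]

lemma mul_addMatrix_apply (i j : Fin n) (c : ℍ[ℝ]) (A : Matrix (Fin n) (Fin n) ℍ[ℝ])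
    (k l : Fin n) :
    (A * addMatrix i j c) k l = A k l + if l = i then A k j * c else 0 := by
  by_cases h : l = i <;> simp [addMatrix, Matrix.mul_apply, mul_add, Finset.sum_add_distrib, h]

lemma conjTranspose_addMatrix_mul_apply (i j : Fin n) (c : ℍ[ℝ])
    (A : Matrix (Fin n) (Fin n) ℍ[ℝ]) (k l : Fin n) :
    ((addMatrix i j c)ᴴ * A) k l = A k l + if k = i then star c * A j l else 0 := by
  have : ((addMatrix i j c)ᴴ * A) k l = star ((Aᴴ * addMatrix i j c) l k) := by
    rw [← Matrix.conjTranspose_apply, Matrix.conjTranspose_mul, Matrix.conjTranspose_conjTranspose]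
  rw [this, mul_addMatrix_apply]
  by_cases h : k = i <;> simp [h]

lemma switchMatrix_apply (i j k l : Fin n) :
    (switchMatrix i j : Matrix (Fin n) (Fin n) ℍ[ℝ]) k l =
      if l = Equiv.swap i j k then 1 else 0 := by
  simp only [switchMatrix, Matrix.of_apply]
  congr 1
  rw [eq_iff_iff, Equiv.swap_apply_def]
  split_ifs <;> grind

lemma conjTranspose_switchMatrix_mul (i j : Fin n) :
    (switchMatrix i j : Matrix (Fin n) (Fin n) ℍ[ℝ])ᴴ * switchMatrix i j = 1 := by
  ext1 k l
  simp only [Matrix.mul_apply, Matrix.conjTranspose_apply, switchMatrix_apply, Matrix.one_apply]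
  rw [Finset.sum_eq_single (Equiv.swap i j k)]
  · simp [eq_comm]
  · intro b _ hb
    rw [if_neg, star_zero, zero_mul]
    rintro rfl
    simp at hb
  · simp

end Elementary

/-- Properties of the Chen determinant of an `(n+1) × (n+1)` quaternion Hermitian matrix:
invariance under two-sided switching, behavior under one-sided and two-sided multiplication
matrices, invariance under two-sided addition matrices, and invariance under unitary
similarity. -/
theorem statement3 {n : ℕ} (A : Matrix (Fin (n + 1)) (Fin (n + 1)) ℍ[ℝ])
    (hA : Aᴴ = A) (α : ℍ[ℝ]) :
    (∀ i j : Fin (n + 1),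
      Cdet ((switchMatrix i j)ᴴ * A * switchMatrix i j) = Cdet A) ∧
    Cdet (mulMatrix (Fin.last n) α * A) = α * Cdet A ∧
    Cdet (A * mulMatrix (Fin.last n) α) = α * Cdet A ∧
    (∀ i : Fin (n + 1),
      Cdet ((mulMatrix i α)ᴴ * A * mulMatrix i α) = star α * α * Cdet A) ∧
    (∀ i j : Fin (n + 1), i ≠ j →
      Cdet ((addMatrix i j α)ᴴ * A * addMatrix i j α) = Cdet A) ∧
    (∀ U : Matrix (Fin (n + 1)) (Fin (n + 1)) ℍ[ℝ], Uᴴ * U = 1 →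
      Cdet (Uᴴ * A * U) = Cdet A) := by
  have hB : ∀ P : Matrix (Fin (n + 1)) (Fin (n + 1)) ℍ[ℝ], (Pᴴ * A * P)ᴴ = Pᴴ * A * P := by
    intro P
    simp [Matrix.conjTranspose_mul, hA, Matrix.mul_assoc]
  -- A matrix that differs from `A` in the last row or column only.
  have hlast : ∀ B : Matrix (Fin (n + 1)) (Fin (n + 1)) ℍ[ℝ],
      (∀ k l, k ≠ Fin.last n → l ≠ Fin.last n → B k l = A k l) →
      Cdet B = pathConv B (chenOn A) (Finset.univ.erase (Fin.last n)) (Fin.last n)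
        (Fin.last n) := by
    intro B h0
    have hmax : ∀ x ∈ Finset.univ.erase (Fin.last n), x < Fin.last n := fun x hx =>
      lt_of_le_of_ne (Fin.le_last x) (Finset.ne_of_mem_erase hx)
    rw [← pathConv_congr_weight B (chenOn_of_agree h0), ← chenOn_insert_max B hmax,
      Finset.insert_erase (Finset.mem_univ _), chenOn_univ]
  have hcongr : ∀ (B : Matrix (Fin (n + 1)) (Fin (n + 1)) ℍ[ℝ]) (i : Fin (n + 1)), Bᴴ = B →
      (∀ k l, k ≠ i → l ≠ i → B k l = A k l) →
      Cdet B = pathConv B (chenOn A) (Finset.univ.erase i) i i := by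
    intro B i hB h0
    rw [Cdet_eq_pathConv hB i, pathConv_congr_weight B (chenOn_of_agree h0)]
  refine ⟨fun i j => Cdet_unitary hA (conjTranspose_switchMatrix_mul i j), ?_, ?_, fun i => ?_,
    fun i j hij => ?_, fun U hU => Cdet_unitary hA hU⟩
  · have h0 : ∀ k l, k ≠ Fin.last n → l ≠ Fin.last n →
        (mulMatrix (Fin.last n) α * A) k l = A k l := by
      intro k l hk _
      simp [mulMatrix_mul_apply, hk]
    rw [hlast _ h0, pathConv_combination hA (j := Fin.last n) (a := 1) (b := 0) (a' := α) (b' := 0)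
      h0 (fun k hk => by simp [mulMatrix_mul_apply, hk])
      (fun l _ => by simp [mulMatrix_mul_apply])
      (by simp [mulMatrix_mul_apply]) (by simp), ← Cdet_eq_pathConv hA]
    simp
  · have h0 : ∀ k l, k ≠ Fin.last n → l ≠ Fin.last n →
        (A * mulMatrix (Fin.last n) α) k l = A k l := by
      intro k l _ hl
      simp [mul_mulMatrix_apply, hl]
    rw [hlast _ h0, pathConv_combination hA (j := Fin.last n) (a := α) (b := 0) (a' := 1) (b' := 0)
      h0 (fun k _ => by simp [mul_mulMatrix_apply])
      (fun l hl => by simp [mul_mulMatrix_apply, hl])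
      (by simp [mul_mulMatrix_apply]) (by simp), ← Cdet_eq_pathConv hA]
    simp [(commute_of_star_eq (star_Cdet hA) α).eq]
  · have hent : ∀ k l, ((mulMatrix i α)ᴴ * A * mulMatrix i α) k l =
        (if k = i then star α else 1) * A k l * (if l = i then α else 1) := by
      intro k l
      rw [mul_mulMatrix_apply, conjTranspose_mulMatrix, mulMatrix_mul_apply]
    have h0 : ∀ k l, k ≠ i → l ≠ i → ((mulMatrix i α)ᴴ * A * mulMatrix i α) k l = A k l := by
      intro k l hk hl
      simp [hent, hk, hl]
    rw [hcongr _ i (hB _) h0, pathConv_combination hA (j := i) (a := α) (b := 0) (a' := star α)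
      (b' := 0) h0 (fun k hk => by simp [hent, hk]) (fun l hl => by simp [hent, hl])
      (by simp [hent]) (by simp), ← Cdet_eq_pathConv hA]
    simp [mul_assoc, (commute_of_star_eq (star_Cdet hA) α).eq]
  · have hent : ∀ k l, ((addMatrix i j α)ᴴ * A * addMatrix i j α) k l =
        (A k l + if k = i then star α * A j l else 0) +
          if l = i then (A k j + if k = i then star α * A j j else 0) * α else 0 := by
      intro k l
      rw [mul_addMatrix_apply, conjTranspose_addMatrix_mul_apply,
        conjTranspose_addMatrix_mul_apply]
    have h0 : ∀ k l, k ≠ i → l ≠ i → ((addMatrix i j α)ᴴ * A * addMatrix i j α) k l = A k l := by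
      intro k l hk hl
      simp [hent, hk, hl]
    have hj : j ∈ Finset.univ.erase i := by simp [hij.symm]
    have hji := pathConv_eq_zero hA hj i
    have hjj := pathConv_eq_zero hA hj j
    have hij0 := star_pathConv hA (Finset.univ.erase i) j i
    rw [hji, star_zero] at hij0
    rw [hcongr _ i (hB _) h0, pathConv_combination hA (j := j) (a := 1) (b := α) (a' := 1)
      (b' := star α) h0 (fun k hk => by simp [hent, hk]) (fun l hl => by simp [hent, hl])
      (by simp [hent]; noncomm_ring) (by simp), ← Cdet_eq_pathConv hA, hji, hjj, ← hij0]
    simp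

end DQPaper
end
end

section
/- Let A = (a_ij) be an n×n dual quaternion Hermitian matrix and let p₁,…,p_s, k, q₁,…,q_t be distinct indices in {1,…,n}. For a cycle (i₁ … i_m) of indices, write ⟨i₁ … i_m i₁⟩ = a_{i₁ i₂} a_{i₂ i₃} ⋯ a_{i_m i₁}. Let σ₀ = (p₁ p₂ ⋯ p_s k q₁ ⋯ q_t), σ̄₀ = (p₁ q_t ⋯ q₁ k p_s ⋯ p₂), σ₀⁺ = (k q₁ ⋯ q_t p₁ p₂ ⋯ p_s), and σ̄₀⁺ = (k p_s ⋯ p₂ p₁ q_t ⋯ q₁). Then ⟨σ₀⟩ + ⟨σ̄₀⟩ = ⟨σ₀⁺⟩ + ⟨σ̄₀⁺⟩, and both sides are dual numbers; explicitly, a_{p₁p₂} ⋯ a_{p_s k} a_{k q₁} ⋯ a_{q_t p₁} + a_{p₁ q_t} ⋯ a_{q₁ k} a_{k p_s} ⋯ a_{p₂ p₁} = a_{k q₁} ⋯ a_{q_t p₁} a_{p₁ p₂} ⋯ a_{p_s k} + a_{k p_s} ⋯ a_{p₂ p₁} a_{p₁ q_t} ⋯ a_{q₁ k}. -/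
/-!
Cut the cycle at `p₁` and `k` into two arcs, with products `x` (from `p₁` to `k`) and `y` (from `k`
to `p₁`). By `chainProd_split` the cycle product is `x * y` when started at `p₁` and `y * x` when
started at `k`, and by `chainProd_reverse` the reversed cycles give the conjugates `star (x * y)`
and `star (y * x)`, since `A` is Hermitian. The two sums are thus twice the real parts of `x * y`
and `y * x` (`add_star_dq`), which are dual numbers, and they agree because the real part is
invariant under swapping two factors (`dqRe_mul_comm`).
-/

/-!
Formalization background for "Moore Determinant of Dual Quaternion Hermitian Matrices"
(Cui, Qi, Song, Wang).

A dual quaternion is `q = q_s + q_d ε` with `q_s, q_d` quaternions, `ε² = 0`; it is modeled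
by `DualNumber (Quaternion ℝ)`.
-/

open Quaternion Matrix

noncomputable section

namespace DQPaper

lemma star_fst (q : DualQuaternion) : (star q).fst = star q.fst := rfl

lemma star_snd (q : DualQuaternion) : (star q).snd = star q.snd := rfl

lemma star_one_dq : star (1 : DualQuaternion) = 1 := by
  apply TrivSqZeroExt.ext <;> simp [star_fst, star_snd]

lemma star_mul_dq (x y : DualQuaternion) : star (x * y) = star y * star x := by
  apply TrivSqZeroExt.ext
  · simp [star_fst]
  · simp [star_fst, star_snd, add_comm]

lemma add_star_dq (q : DualQuaternion) : q + star q = toDQ (dqRe q + dqRe q) := by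
  apply TrivSqZeroExt.ext
  · change q.fst + star q.fst = ((q.fst.re + q.fst.re : ℝ) : ℍ[ℝ])
    rw [Quaternion.self_add_star', two_mul]
  · change q.snd + star q.snd = ((q.snd.re + q.snd.re : ℝ) : ℍ[ℝ])
    rw [Quaternion.self_add_star', two_mul]

lemma dqRe_mul_comm (x y : DualQuaternion) : dqRe (x * y) = dqRe (y * x) := by
  apply TrivSqZeroExt.ext
  · change (x * y).fst.re = (y * x).fst.re
    simp only [TrivSqZeroExt.fst_mul, Quaternion.re_mul]
    ring
  · change (x * y).snd.re = (y * x).snd.re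
    simp only [TrivSqZeroExt.snd_mul, smul_eq_mul, MulOpposite.smul_eq_mul_unop,
      MulOpposite.unop_op, Quaternion.re_add, Quaternion.re_mul]
    ring

/-- A chain product factors at any vertex of the chain, which is then shared by both factors. -/
lemma chainProd_split {n : ℕ} (A : Matrix (Fin n) (Fin n) DualQuaternion) (k : Fin n)
    (l m : List (Fin n)) :
    chainProd A (l ++ k :: m) = chainProd A (l ++ [k]) * chainProd A (k :: m) := by
  induction l with
  | nil => simp [chainProd]
  | cons i l ih =>
    cases l with
    | nil => simp [chainProd]
    | cons j l =>
      simp only [List.cons_append, chainProd] at ih ⊢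
      rw [ih, mul_assoc]

/-- For Hermitian `A`, traversing a chain backwards conjugates its product. -/
lemma chainProd_reverse {n : ℕ} {A : Matrix (Fin n) (Fin n) DualQuaternion} (hA : Aᴴ = A)
    (l : List (Fin n)) : chainProd A l.reverse = star (chainProd A l) := by
  induction l with
  | nil => simp [chainProd, star_one_dq]
  | cons i l ih =>
    cases l with
    | nil => simp [chainProd, star_one_dq]
    | cons j l =>
      have hji : A j i = star (A i j) := by
        conv_lhs => rw [← hA]
        rfl
      have hsplit := chainProd_split A j l.reverse [i]
      simp only [List.reverse_cons, List.append_assoc, List.cons_append, List.nil_append]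
        at ih hsplit ⊢
      rw [hsplit, ih]
      simp [chainProd, star_mul_dq, hji]

/-- Lemma 3.1: for a dual quaternion Hermitian matrix `A` and distinct indices
`p₁, p₂, …, p_s, k, q₁, …, q_t` (here `ps = [p₂, …, p_s]`, `qs = [q₁, …, q_t]`),
with `σ₀ = (p₁ ⋯ p_s k q₁ ⋯ q_t)`, `σ̄₀ = (p₁ q_t ⋯ q₁ k p_s ⋯ p₂)`,
`σ₀⁺ = (k q₁ ⋯ q_t p₁ ⋯ p_s)`, `σ̄₀⁺ = (k p_s ⋯ p₂ p₁ q_t ⋯ q₁)`, one has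
`⟨σ₀⟩ + ⟨σ̄₀⟩ = ⟨σ₀⁺⟩ + ⟨σ̄₀⁺⟩`, and both sides are dual numbers. -/
theorem statement4 {n : ℕ} (A : Matrix (Fin n) (Fin n) DualQuaternion) (hA : Aᴴ = A)
    (p₁ k : Fin n) (ps qs : List (Fin n))
    (hdistinct : (p₁ :: (ps ++ k :: qs)).Nodup) :
    chainProd A ((p₁ :: ps ++ [k] ++ qs) ++ [p₁]) +
        chainProd A ((p₁ :: qs.reverse ++ [k] ++ ps.reverse) ++ [p₁]) =
      chainProd A ((k :: qs ++ p₁ :: ps) ++ [k]) +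
        chainProd A ((k :: ps.reverse ++ [p₁] ++ qs.reverse) ++ [k]) ∧
    IsDualNum (chainProd A ((p₁ :: ps ++ [k] ++ qs) ++ [p₁]) +
        chainProd A ((p₁ :: qs.reverse ++ [k] ++ ps.reverse) ++ [p₁])) ∧
    IsDualNum (chainProd A ((k :: qs ++ p₁ :: ps) ++ [k]) +
        chainProd A ((k :: ps.reverse ++ [p₁] ++ qs.reverse) ++ [k])) := by
  -- `x` and `y` are the products along the two arcs into which `p₁` and `k` cut the cycle.
  set x := chainProd A (p₁ :: ps ++ [k]) with hx
  set y := chainProd A (k :: qs ++ [p₁]) with hy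
  have h₁ : chainProd A ((p₁ :: ps ++ [k] ++ qs) ++ [p₁]) = x * y := by
    have h := chainProd_split A k (p₁ :: ps) (qs ++ [p₁])
    simpa [hx, hy] using h
  have h₂ : chainProd A ((k :: qs ++ p₁ :: ps) ++ [k]) = y * x := by
    have h := chainProd_split A p₁ (k :: qs) (ps ++ [k])
    simpa [hx, hy] using h
  have h₃ : chainProd A ((p₁ :: qs.reverse ++ [k] ++ ps.reverse) ++ [p₁]) = star (x * y) := by
    rw [← h₁, ← chainProd_reverse hA]
    simp
  have h₄ : chainProd A ((k :: ps.reverse ++ [p₁] ++ qs.reverse) ++ [k]) = star (y * x) := by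
    rw [← h₂, ← chainProd_reverse hA]
    simp
  rw [h₁, h₂, h₃, h₄, add_star_dq, add_star_dq, dqRe_mul_comm y x]
  exact ⟨rfl, ⟨_, rfl⟩, ⟨_, rfl⟩⟩

end DQPaper
end
end
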